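/- arXiv:2405.17367 — 2 statements merged into one kernel-verified Lean document; each statement's English description precedes it below -/
import Mathlib

section
/- Let X, Y be Banach spaces with Y compactly embedded in X, and let {U_σ(t,s)}_{σ∈Σ} be a system of evolution processes on X with Σ = H_Ξ(g) the hull of some g ∈ Ξ, where {θ_t}_{t∈ℝ} is a group of continuous maps of Ξ such that (t,σ) ↦ θ_tσ is continuous. Assume the system has a closed bounded uniformly absorbing set 𝓑 and satisfies hypotheses (H2) uniform smoothing on 𝓑, (H3) uniform Hölder continuity on 𝓑 with exponents γ, θ ∈ (0,1], (H4) Lipschitz driving group: d_Ξ(θ_tξ₁,θ_tξ₂) ≤ P e^{ζt} d_Ξ(ξ₁,ξ₂) for t ≥ 0, and (H5) Lipschitz dependence on the symbol: ‖U_{σ₁}(t,0)x − U_{σ₂}(t,0)x‖ ≤ L(t) d_Ξ(σ₁,σ₂) for t ≥ 1, x ∈ 𝓑, with 1 ≤ L(t) ≤ c₁e^{βt}. Suppose the process {U_g(t,s)} has a pullback attractor {A_g(t)}_{t∈ℝ}, and that there exists a compact θ-invariant set Σ₋ ⊆ Ξ of finite box-counting dimension with α(g) ⊆ Σ₋ and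 constants η₁ > 0, C ≥ 1 such that dist(θ_t g, Σ₋) ≤ C e^{η₁ t} for all t ∈ ℝ. Then for every T ∈ ℝ, the set ⋃_{t ≤ T} A_g(t) has finite box-counting dimension. -/
open Filter Set Metric Bornology
open scoped ENNReal NNReal Topology

noncomputable def coverN {X : Type*} [MetricSpace X] (K : Set X) (r : ℝ) : ℝ≥0∞ :=
  sInf {n : ℝ≥0∞ | ∃ s : Finset X, (s.card : ℝ≥0∞) = n ∧ K ⊆ ⋃ x ∈ s, Metric.ball x r}

noncomputable def dimBox {X : Type*} [MetricSpace X] (K : Set X) : ℝ≥0∞ :=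
  Filter.limsup (fun r : ℝ =>
    if coverN K r = ⊤ then (⊤ : ℝ≥0∞)
    else ENNReal.ofReal (Real.log (coverN K r).toReal / (-Real.log r)))
    (nhdsWithin 0 (Set.Ioi 0))

structure EvolSystem (X : Type*) (Ξ : Type*) [MetricSpace X] [MetricSpace Ξ] where
  th : ℝ → Ξ → Ξ
  th_cont : ∀ t, Continuous (th t)
  th_zero : th 0 = id
  th_add : ∀ t s, th t ∘ th s = th (t + s)
  Sg : Set Ξ
  Sg_compact : IsCompact Sg
  Sg_inv : ∀ t, th t '' Sg = Sg
  U : Ξ → ℝ → ℝ → X → X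
  U_cont : ∀ σ ∈ Sg, ∀ t s : ℝ, s ≤ t → Continuous (U σ t s)
  U_id : ∀ σ ∈ Sg, ∀ s : ℝ, U σ s s = id
  U_comp : ∀ σ ∈ Sg, ∀ t s r : ℝ, r ≤ s → s ≤ t → U σ t s ∘ U σ s r = U σ t r
  U_jointCont : ∀ σ ∈ Sg, ∀ x : X,
    ContinuousOn (fun p : ℝ × ℝ => U σ p.1 p.2 x) {p : ℝ × ℝ | p.2 ≤ p.1}
  translation : ∀ σ ∈ Sg, ∀ h t s : ℝ, s ≤ t → U (th h σ) t s = U σ (t + h) (s + h)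

def IsPullbackAttractor {X : Type*} [MetricSpace X] (U : ℝ → ℝ → X → X) (A : ℝ → Set X) : Prop :=
  (∀ t, IsCompact (A t)) ∧ Bornology.IsBounded (⋃ t : ℝ, A t) ∧
  (∀ t s : ℝ, s ≤ t → U t s '' A s = A t) ∧
  (∀ B : Set X, Bornology.IsBounded B → ∀ t : ℝ, ∀ ε > 0, ∃ s₀ ≤ t, ∀ s ≤ s₀,
     ∀ x ∈ B, Metric.infDist (U t s x) (A t) ≤ ε)


theorem dimBox_ne_top_of {X : Type*} [MetricSpace X] (S : Set X) (l0 M : ℝ)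
    (h : ∀ l ≥ l0, ∃ s : Finset X, S ⊆ ⋃ x ∈ s, Metric.ball x (Real.exp (-l)) ∧
      (s.card : ℝ) ≤ 4 * Real.exp (M * l)) : dimBox S ≠ ⊤ := by
  have key : dimBox S ≤ ENNReal.ofReal (Real.log 4 + |M|) := by
    unfold dimBox
    refine Filter.limsup_le_of_le (by isBoundedDefault) ?_
    have hmem : Set.Ioo (0:ℝ) (Real.exp (-(max l0 1))) ∈ nhdsWithin (0:ℝ) (Set.Ioi 0) :=
      Ioo_mem_nhdsGT (Real.exp_pos _)
    filter_upwards [hmem] with r hr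
    obtain ⟨hr0, hr1⟩ := hr
    have hl : max l0 1 < -Real.log r := by
      have := Real.log_lt_log hr0 hr1
      rw [Real.log_exp] at this
      linarith
    have hl0 : l0 ≤ -Real.log r := (le_max_left _ _).trans hl.le
    have hl1 : 1 ≤ -Real.log r := (le_max_right _ _).trans hl.le
    obtain ⟨s, hs, hc⟩ := h (-Real.log r) hl0
    rw [neg_neg, Real.exp_log hr0] at hs
    have hle : coverN S r ≤ (s.card : ℝ≥0∞) := sInf_le ⟨s, rfl, hs⟩
    have hne : coverN S r ≠ ⊤ := ne_top_of_le_ne_top (ENNReal.natCast_ne_top _) hle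
    rw [if_neg hne]
    apply ENNReal.ofReal_le_ofReal
    have h1 : (coverN S r).toReal ≤ s.card := by
      have := ENNReal.toReal_mono (ENNReal.natCast_ne_top _) hle
      simpa using this
    have hlog4 : 0 ≤ Real.log 4 := Real.log_nonneg (by norm_num)
    rw [div_le_iff₀ (by linarith)]
    rcases eq_or_lt_of_le (ENNReal.toReal_nonneg (a := coverN S r)) with h0 | h0
    · rw [← h0, Real.log_zero]
      have := abs_nonneg M
      apply mul_nonneg <;> linarith
    · have h2 := Real.log_le_log h0 (h1.trans hc)
      rw [Real.log_mul (by norm_num) (Real.exp_pos _).ne', Real.log_exp] at h2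
      have h3 : M * -Real.log r ≤ |M| * -Real.log r :=
        mul_le_mul_of_nonneg_right (le_abs_self M) (by linarith)
      nlinarith
  exact ne_top_of_le_ne_top ENNReal.ofReal_ne_top key

theorem exists_cover_of_dimBox {X : Type*} [MetricSpace X] (S : Set X) (h : dimBox S ≠ ⊤) :
    ∃ d ≥ (0:ℝ), ∃ r0 > (0:ℝ), ∀ r, 0 < r → r < r0 → ∃ s : Finset X,
      S ⊆ ⋃ x ∈ s, Metric.ball x r ∧ (s.card : ℝ) ≤ 2 * Real.exp (d * (-Real.log r)) := by
  obtain ⟨d, hd⟩ := ENNReal.lt_iff_exists_nnreal_btwn.1 (lt_top_iff_ne_top.2 h)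
  have hev := Filter.eventually_lt_of_limsup_lt hd.1 (by isBoundedDefault)
  rw [eventually_nhdsWithin_iff, Metric.eventually_nhds_iff] at hev
  obtain ⟨ε, hε, hev⟩ := hev
  refine ⟨d, d.2, min ε 1, by positivity, fun r hr hr1 => ?_⟩
  have hlog : 0 < -Real.log r := by
    have := Real.log_neg hr (hr1.trans_le (min_le_right _ _))
    linarith
  have h1 := hev (y := r) (by
    rw [Real.dist_eq, sub_zero, abs_of_pos hr]
    exact hr1.trans_le (min_le_left _ _)) hr
  split_ifs at h1 with h2
  · exact absurd h1 (by simp)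
  have h3 : Real.log (coverN S r).toReal / (-Real.log r) < d := by
    by_contra hcon
    push Not at hcon
    have := ENNReal.ofReal_le_ofReal hcon
    rw [ENNReal.ofReal_coe_nnreal] at this
    exact absurd h1 (not_lt.2 this)
  rw [div_lt_iff₀ hlog] at h3
  have h4 : (coverN S r).toReal ≤ Real.exp (d * (-Real.log r)) := by
    rcases eq_or_lt_of_le (ENNReal.toReal_nonneg (a := coverN S r)) with h0 | h0
    · rw [← h0]; positivity
    · rw [← Real.exp_log h0]
      exact Real.exp_le_exp.2 h3.le
  have h1e : 1 ≤ Real.exp (d * (-Real.log r)) := Real.one_le_exp (mul_nonneg d.2 hlog.le)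
  have h5 : coverN S r < ENNReal.ofReal (2 * Real.exp (d * (-Real.log r))) := by
    rw [ENNReal.lt_ofReal_iff_toReal_lt h2]
    linarith
  unfold coverN at h5
  obtain ⟨_, ⟨s, rfl, hs⟩, hlt⟩ := sInf_lt_iff.1 h5
  refine ⟨s, hs, ?_⟩
  rw [ENNReal.lt_ofReal_iff_toReal_lt (ENNReal.natCast_ne_top _)] at hlt
  simpa using hlt.le

/-- one step of the smoothing cover -/
theorem one_step {X Y : Type*} [NormedAddCommGroup X] [NormedSpace ℝ X]
    [NormedAddCommGroup Y] [NormedSpace ℝ Y] (e : Y →L[ℝ] X) (k : ℝ) (hk : 0 < k)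
    (N : Finset X) (hN : ⇑e '' Metric.closedBall 0 1 ⊆ ⋃ y ∈ N, Metric.ball y (1 / (4 * k)))
    (S : X → X) (B : Set X)
    (hS : ∀ x ∈ B, ∀ y ∈ B, ∃ w : Y, e w = S x - S y ∧ ‖w‖ ≤ k * ‖x - y‖)
    (c : X) (R : ℝ) (hR : 0 < R) :
    ∃ s : Finset X, s.card ≤ N.card ∧ ∀ x ∈ B, dist x c ≤ R → ∃ c' ∈ s, dist (S x) c' ≤ R / 2 := by
  classical
  by_cases hD : ∃ x0 ∈ B, dist x0 c ≤ R
  · obtain ⟨x0, hx0, hx0c⟩ := hD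
    refine ⟨N.image (fun y => S x0 + (2 * R * k) • y), Finset.card_image_le, fun x hx hxc => ?_⟩
    obtain ⟨w, hw, hwn⟩ := hS x hx x0 hx0
    have hpos : 0 < 2 * R * k := by positivity
    have hd : ‖x - x0‖ ≤ 2 * R := by
      rw [← dist_eq_norm]
      have := dist_triangle_right x x0 c
      linarith
    have hw2 : ‖w‖ ≤ 2 * R * k := by nlinarith
    have hmem : e ((2 * R * k)⁻¹ • w) ∈ ⇑e '' Metric.closedBall 0 1 := by
      refine ⟨_, ?_, rfl⟩
      rw [mem_closedBall_zero_iff, norm_smul, norm_inv, Real.norm_of_nonneg hpos.le,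
        inv_mul_le_iff₀ hpos]
      linarith
    have := hN hmem
    simp only [Set.mem_iUnion, Metric.mem_ball] at this
    obtain ⟨y, hy, hdy⟩ := this
    refine ⟨_, Finset.mem_image_of_mem _ hy, ?_⟩
    have heq : S x - (S x0 + (2 * R * k) • y) = (2 * R * k) • (e ((2 * R * k)⁻¹ • w) - y) := by
      rw [smul_sub, map_smul, smul_smul, mul_inv_cancel₀ hpos.ne', one_smul, hw]
      abel
    rw [dist_eq_norm, heq, norm_smul, Real.norm_of_nonneg hpos.le, ← dist_eq_norm]
    calc 2 * R * k * dist (e ((2 * R * k)⁻¹ • w)) y ≤ 2 * R * k * (1 / (4 * k)) := by gcongr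
      _ = R / 2 := by field_simp; norm_num
  · push Not at hD
    exact ⟨∅, by simp, fun x hx hxc => absurd hxc (not_le.2 (hD x hx))⟩

theorem iter_cover {X Y Ξ : Type*} [NormedAddCommGroup X] [NormedSpace ℝ X]
    [NormedAddCommGroup Y] [NormedSpace ℝ Y] [MetricSpace Ξ] (e : Y →L[ℝ] X)
    (sys : EvolSystem X Ξ) (B : Set X) (k : ℝ) (hk : 0 < k) (t0 : ℝ) (ht0 : 0 < t0)
    (N : Finset X) (hN : ⇑e '' Metric.closedBall 0 1 ⊆ ⋃ y ∈ N, Metric.ball y (1 / (4 * k)))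
    (hself : ∀ t ≥ t0, ∀ σ ∈ sys.Sg, sys.U σ t 0 '' B ⊆ B)
    (hS : ∀ σ ∈ sys.Sg, ∀ x ∈ B, ∀ y ∈ B,
      ∃ w : Y, e w = sys.U σ t0 0 x - sys.U σ t0 0 y ∧ ‖w‖ ≤ k * ‖x - y‖)
    (R : ℝ) (hR : 0 < R) (hB : ∀ x ∈ B, dist x 0 ≤ R) (n : ℕ) :
    ∀ σ ∈ sys.Sg, ∃ s : Finset X, s.card ≤ N.card ^ n ∧
      ∀ x ∈ B, ∃ c ∈ s, dist (sys.U σ (n * t0) 0 x) c ≤ R / 2 ^ n := by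
  classical
  induction n with
  | zero =>
    intro σ hσ
    refine ⟨{0}, by simp, fun x hx => ⟨0, by simp, ?_⟩⟩
    have := sys.U_id σ hσ 0
    simp only [Nat.cast_zero, zero_mul, this, id, pow_zero, div_one]
    exact hB x hx
  | succ n ih =>
    intro σ hσ
    obtain ⟨s, hs, hc⟩ := ih σ hσ
    have hσ' : sys.th (n * t0) σ ∈ sys.Sg := by
      rw [← sys.Sg_inv (n * t0)]
      exact ⟨σ, hσ, rfl⟩
    have h1 := fun c => one_step e k hk N hN (sys.U (sys.th (n * t0) σ) t0 0) B (hS _ hσ') c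
      (R / 2 ^ n) (by positivity)
    choose F hF1 hF2 using h1
    refine ⟨s.biUnion F, ?_, fun x hx => ?_⟩
    · refine (Finset.card_biUnion_le_card_mul s F N.card (fun c _ => hF1 c)).trans ?_
      rw [pow_succ]
      gcongr
    · obtain ⟨c, hcs, hcd⟩ := hc x hx
      have hmem : sys.U σ (n * t0) 0 x ∈ B := by
        rcases Nat.eq_zero_or_pos n with h0 | h0
        · subst h0
          simpa [sys.U_id σ hσ 0] using hx
        · refine hself _ ?_ σ hσ ⟨x, hx, rfl⟩
          have : (1:ℝ) ≤ n := by exact_mod_cast h0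
          nlinarith
      obtain ⟨c', hc', hd⟩ := hF2 c _ hmem hcd
      refine ⟨c', Finset.mem_biUnion.2 ⟨c, hcs, hc'⟩, ?_⟩
      have htr := sys.translation σ hσ (n * t0) t0 0 ht0.le
      have hnn : (0:ℝ) ≤ n * t0 := by positivity
      have hcomp := sys.U_comp σ hσ (t0 + n * t0) (n * t0) 0 hnn (by linarith)
      rw [htr, zero_add] at hd
      have e1 : ((n + 1 : ℕ) : ℝ) * t0 = t0 + n * t0 := by push_cast; ring
      rw [e1, ← hcomp, Function.comp_apply]
      refine hd.trans (le_of_eq ?_)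
      rw [pow_succ]
      field_simp

set_option maxHeartbeats 4000000

/-- Corollary: under (H1)-(H5), if only the past asymptotic symbol set `Σ₋`
(compact, invariant, finite dimensional, containing `α(g)`, approached exponentially as
`t → -∞`) is assumed, then for every `T ∈ ℝ` the set `⋃_{t ≤ T} A_g(t)` has finite
box-counting dimension. -/
theorem statement3
    {X Y Ξ : Type*} [NormedAddCommGroup X] [NormedSpace ℝ X] [CompleteSpace X]
    [NormedAddCommGroup Y] [NormedSpace ℝ Y] [CompleteSpace Y] [MetricSpace Ξ]
    (e : Y →L[ℝ] X) (he_inj : Function.Injective e)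
    (he_cpt : IsCompact (closure (⇑e '' Metric.closedBall 0 1)))
    (sys : EvolSystem X Ξ)
    (g : Ξ) (hSg : sys.Sg = closure {x : Ξ | ∃ t : ℝ, sys.th t g = x})
    (hθjoint : Continuous fun p : ℝ × Ξ => sys.th p.1 p.2)
    (𝓑 : Set X) (h𝓑closed : IsClosed 𝓑) (h𝓑bdd : Bornology.IsBounded 𝓑)
    (hAbsorb : ∀ B : Set X, Bornology.IsBounded B → ∃ tB ≥ (0:ℝ), ∀ t ≥ tB, ∀ σ ∈ sys.Sg,
      sys.U σ t 0 '' B ⊆ 𝓑)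
    (τ : ℝ) (hτ : 0 < τ)
    (hSelfAbs : ∀ t ≥ τ, ∀ σ ∈ sys.Sg, sys.U σ t 0 '' 𝓑 ⊆ 𝓑)
    -- (H2) uniform smoothing
    (κ : ℝ → ℝ)
    (hH2 : ∀ t > (0:ℝ), 0 < κ t ∧ ∀ σ ∈ sys.Sg, ∀ x ∈ 𝓑, ∀ y ∈ 𝓑,
      ∃ w : Y, e w = sys.U σ t 0 x - sys.U σ t 0 y ∧ ‖w‖ ≤ κ t * ‖x - y‖)
    -- (H3) uniform Hölder continuity
    (γ θ : ℝ) (hγ : γ ∈ Set.Ioc (0:ℝ) 1) (hθ : θ ∈ Set.Ioc (0:ℝ) 1)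
    (C : ℝ → ℝ)
    (hH3 : ∀ rr : ℝ, 0 < rr → 0 < C rr ∧ ∀ σ ∈ sys.Sg, ∀ s : ℝ,
      ∀ t ∈ Set.Icc (0:ℝ) rr, ∀ t' ∈ Set.Icc (0:ℝ) rr, ∀ x ∈ 𝓑, ∀ y ∈ 𝓑,
      ‖sys.U σ (t + s) s x - sys.U σ (t' + s) s y‖ ≤ C rr * (‖x - y‖ ^ γ + |t - t'| ^ θ))
    -- (H4) the driving group is exponentially Lipschitz
    (P ζ : ℝ) (hP : 1 ≤ P) (hζ : 0 < ζ)
    (hH4 : ∀ t ≥ (0:ℝ), ∀ ξ₁ ξ₂ : Ξ, dist (sys.th t ξ₁) (sys.th t ξ₂) ≤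
      P * Real.exp (ζ * t) * dist ξ₁ ξ₂)
    -- (H5) Lipschitz dependence on the symbol
    (L : ℝ → ℝ) (c₁ β : ℝ) (hc₁ : 0 < c₁) (hβ : 0 < β)
    (hL : ∀ t ≥ (1:ℝ), 1 ≤ L t ∧ L t ≤ c₁ * Real.exp (β * t))
    (hH5 : ∀ t ≥ (1:ℝ), ∀ σ₁ ∈ sys.Sg, ∀ σ₂ ∈ sys.Sg, ∀ x ∈ 𝓑,
      ‖sys.U σ₁ t 0 x - sys.U σ₂ t 0 x‖ ≤ L t * dist σ₁ σ₂)
    -- the process of `g` has a pullback attractor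
    (A : ℝ → Set X) (hA : IsPullbackAttractor (sys.U g) A)
    -- the finite dimensional compact invariant past asymptotic symbol set
    (Sm : Set Ξ) (hSmcpt : IsCompact Sm) (hSminv : ∀ t : ℝ, sys.th t '' Sm = Sm)
    (hSmdim : dimBox Sm ≠ ⊤)
    (hα : {σ : Ξ | ∃ tn : ℕ → ℝ, Tendsto tn atTop atBot ∧
      Tendsto (fun n => sys.th (tn n) g) atTop (nhds σ)} ⊆ Sm)
    (η₁ cC : ℝ) (hη₁ : 0 < η₁) (hcC : 1 ≤ cC)
    (hdistm : ∀ t : ℝ, Metric.infDist (sys.th t g) Sm ≤ cC * Real.exp (η₁ * t)) :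
    ∀ T : ℝ, dimBox (⋃ t ∈ Set.Iic T, A t) ≠ ⊤ := by
  classical
  intro T
  obtain ⟨hAc, hAb, hAinv, -⟩ := hA
  have hgS : g ∈ sys.Sg := by
    rw [hSg]
    exact subset_closure ⟨0, by rw [sys.th_zero]; rfl⟩
  have hthS : ∀ t, sys.th t g ∈ sys.Sg := fun t => by
    rw [← sys.Sg_inv t]; exact ⟨g, hgS, rfl⟩
  -- Sm nonempty
  have hSmne : Sm.Nonempty := by
    obtain ⟨a, -, φ, hφ, hlim⟩ := sys.Sg_compact.tendsto_subseq (x := fun n : ℕ => sys.th (-(n:ℝ)) g)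
      (fun n => hthS _)
    refine ⟨a, hα ⟨fun n => -((φ n : ℕ) : ℝ), ?_, hlim⟩⟩
    exact tendsto_neg_atTop_atBot.comp (tendsto_natCast_atTop_atTop.comp hφ.tendsto_atTop)
  -- representation of A
  have hArep : ∀ t p, 0 ≤ p → ∀ x ∈ A t, ∃ y ∈ A (t - p), sys.U (sys.th (t - p) g) p 0 y = x := by
    intro t p hp x hx
    rw [← hAinv t (t - p) (by linarith)] at hx
    obtain ⟨y, hy, rfl⟩ := hx
    refine ⟨y, hy, ?_⟩
    rw [sys.translation g hgS (t - p) p 0 hp, zero_add, add_sub_cancel]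
  have hAB : ∀ t, A t ⊆ 𝓑 := by
    intro t x hx
    obtain ⟨tB, htB, hab⟩ := hAbsorb _ hAb
    obtain ⟨y, hy, rfl⟩ := hArep t tB htB x hx
    exact hab tB le_rfl _ (hthS _) ⟨y, Set.mem_iUnion.2 ⟨_, hy⟩, rfl⟩
  -- constants
  obtain ⟨t0, ht0τ, ht01⟩ : ∃ t0, τ ≤ t0 ∧ 1 ≤ t0 := ⟨max τ 1, le_max_left _ _, le_max_right _ _⟩
  have ht0 : 0 < t0 := by linarith
  obtain ⟨hk, hsm⟩ := hH2 t0 ht0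
  obtain ⟨N0, hN0⟩ : ∃ N : Finset X,
      ⇑e '' Metric.closedBall 0 1 ⊆ ⋃ y ∈ N, Metric.ball y (1 / (4 * κ t0)) := by
    obtain ⟨s, hsf, hs⟩ := Metric.totallyBounded_iff.1 he_cpt.totallyBounded (1 / (4 * κ t0))
      (by positivity)
    exact ⟨hsf.toFinset, by simpa using subset_closure.trans hs⟩
  obtain ⟨R0, hR0⟩ := h𝓑bdd.subset_closedBall 0
  obtain ⟨R, hR1, hRB⟩ : ∃ R : ℝ, 1 ≤ R ∧ ∀ x ∈ 𝓑, dist x 0 ≤ R :=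
    ⟨max R0 1, le_max_right _ _, fun x hx => (Metric.mem_closedBall.1 (hR0 hx)).trans (le_max_left _ _)⟩
  have hcov := iter_cover e sys 𝓑 (κ t0) hk t0 ht0 N0 hN0
    (fun t ht => hSelfAbs t (by linarith)) hsm R (by linarith) hRB
  obtain ⟨hC1, hH3'⟩ := hH3 1 one_pos
  obtain ⟨d, hd, r0, hr0, hSmcov⟩ := exists_cover_of_dimBox Sm hSmdim
  obtain ⟨hθ0, hθ1⟩ := hθ
  set κ₁ := Real.log (N0.card + 1) with hκ₁
  have hκ₁0 : 0 ≤ κ₁ := Real.log_nonneg (by linarith [Nat.cast_nonneg (α := ℝ) N0.card])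
  set m0 := 2 * Real.log (4 * R) with hm0
  have hm00 : 0 ≤ m0 := by
    have := Real.log_nonneg (x := 4 * R) (by linarith)
    linarith
  -- the final constant
  obtain ⟨M, hM⟩ : ∃ M : ℝ, ∀ l ≥ (1:ℝ), ∀ n : ℝ, 0 ≤ n → n ≤ 2 * l + m0 + 1 →
      ∀ D, D = Real.log (16 * c₁) + l + β * (n * t0) →
      d * D + n * κ₁ ≤ M * l ∧
      (T + (D + Real.log cC) / η₁ + 1 - n * t0) + (l + Real.log (4 * C 1)) / θ + n * κ₁ ≤ M * l
      ∧ n * κ₁ ≤ M * l := by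
    set q := m0 + 3 with hq
    set D1 := |Real.log (16 * c₁)| + 1 + β * (q * t0) with hD1
    have hD10 : 0 ≤ D1 := by positivity
    refine ⟨d * D1 + q * κ₁ + (|T| + (D1 + |Real.log cC|) / η₁ + 1) +
      (1 + |Real.log (4 * C 1)|) / θ, ?_⟩
    intro l hl n hn hnl D hD
    have hl0 : 0 ≤ l := by linarith
    have hb : ∀ x : ℝ, x ≤ |x| * l := fun x => by
      nlinarith [le_abs_self x, abs_nonneg x]
    have hnq : n ≤ q * l := by nlinarith
    have hDl : D ≤ D1 * l := by
      have h1 : β * (n * t0) ≤ β * (q * l * t0) := by gcongr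
      have := hb (Real.log (16 * c₁))
      rw [hD, hD1]
      nlinarith
    have hnk : n * κ₁ ≤ q * κ₁ * l := by nlinarith
    have hdD : d * D ≤ d * D1 * l := by nlinarith
    have h3 : (D + Real.log cC) / η₁ ≤ (D1 + |Real.log cC|) / η₁ * l := by
      rw [div_mul_eq_mul_div]
      gcongr
      nlinarith [hb (Real.log cC)]
    have h4 : (l + Real.log (4 * C 1)) / θ ≤ (1 + |Real.log (4 * C 1)|) / θ * l := by
      rw [div_mul_eq_mul_div]
      gcongr
      nlinarith [hb (Real.log (4 * C 1))]
    have hT := hb T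
    have p1 : 0 ≤ d * D1 * l := by positivity
    have p2 : 0 ≤ q * κ₁ * l := by positivity
    have p3 : 0 ≤ (D1 + |Real.log cC|) / η₁ * l := by positivity
    have p4 : 0 ≤ (1 + |Real.log (4 * C 1)|) / θ * l := by positivity
    have p5 : 0 ≤ |T| * l := by positivity
    have p6 : 0 ≤ n * t0 := by positivity
    have hexp : (d * D1 + q * κ₁ + (|T| + (D1 + |Real.log cC|) / η₁ + 1) +
        (1 + |Real.log (4 * C 1)|) / θ) * l = d * D1 * l + q * κ₁ * l + (|T| * l +
        (D1 + |Real.log cC|) / η₁ * l + l) + (1 + |Real.log (4 * C 1)|) / θ * l := by ring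
    rw [hexp]
    clear_value D1 q
    refine ⟨?_, ?_, ?_⟩ <;> linarith
  refine dimBox_ne_top_of _ (max 1 (max (-Real.log (16 * c₁ * r0) + 1) (-Real.log (4 * C 1)))) M ?_
  intro l hl
  have hl1 : 1 ≤ l := (le_max_left _ _).trans hl
  have hl2 : -Real.log (16 * c₁ * r0) + 1 ≤ l :=
    ((le_max_left _ _).trans (le_max_right _ _)).trans hl
  have hl3 : -Real.log (4 * C 1) ≤ l := ((le_max_right _ _).trans (le_max_right _ _)).trans hl
  set n : ℕ := ⌈2 * l + m0⌉₊ with hn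
  have hn1 : 2 * l + m0 ≤ n := Nat.le_ceil _
  have hn2 : (n:ℝ) ≤ 2 * l + m0 + 1 := (Nat.ceil_lt_add_one (by linarith)).le
  have hn3 : (1:ℝ) ≤ n := by linarith
  have hnt : 1 ≤ n * t0 := by nlinarith
  have hnt0 : 0 ≤ n * t0 := by linarith
  set r := Real.exp (-l) with hr
  have hrpos : 0 < r := Real.exp_pos _
  have hRn : R / 2 ^ n ≤ r / 4 := by
    have h2 : Real.exp ((n:ℝ) / 2) ≤ 2 ^ n := by
      have : (2:ℝ) ^ n = Real.exp (n * Real.log 2) := by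
        rw [Real.exp_nat_mul, Real.exp_log (by norm_num)]
      rw [this]
      apply Real.exp_le_exp.2
      have := Real.log_two_gt_d9
      nlinarith
    have h3 : Real.exp l * (4 * R) ≤ Real.exp ((n:ℝ) / 2) := by
      rw [← Real.exp_log (show 0 < 4 * R by linarith), ← Real.exp_add]
      apply Real.exp_le_exp.2
      linarith
    have h4 : r * Real.exp l = 1 := by rw [hr, ← Real.exp_add]; simp
    rw [div_le_iff₀ (by positivity)]
    calc R = r / 4 * (Real.exp l * (4 * R)) := by
          linear_combination (-R) * h4
      _ ≤ r / 4 * 2 ^ n := by gcongr; exact h3.trans h2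
  set D := Real.log (16 * c₁) + l + β * (n * t0) with hD
  obtain ⟨hM1, hM2, hM3⟩ := hM l hl1 n (by positivity) hn2 D hD
  set δ := Real.exp (-D) with hδ
  have hδpos : 0 < δ := Real.exp_pos _
  have hδr : c₁ * Real.exp (β * (n * t0)) * (4 * δ) = r / 4 := by
    have : δ = (16 * c₁)⁻¹ * r * (Real.exp (β * (n * t0)))⁻¹ := by
      rw [hδ, hD, hr, neg_add, neg_add, Real.exp_add, Real.exp_add, Real.exp_neg (Real.log _),
        Real.exp_log (by positivity), Real.exp_neg (β * _)]
    rw [this]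
    have := Real.exp_pos (β * (n * t0))
    field_simp
    norm_num
  have hδr0 : δ < r0 := by
    rw [hδ, ← Real.exp_log hr0]
    apply Real.exp_lt_exp.2
    rw [Real.log_mul (by positivity) hr0.ne'] at hl2
    have : 0 ≤ β * (n * t0) := by positivity
    linarith
  set a0 := -((D + Real.log cC) / η₁ + 1) with ha0
  have hdelta : ∀ s ≤ a0, Metric.infDist (sys.th s g) Sm < δ := by
    intro s hs
    refine (hdistm s).trans_lt ?_
    rw [← Real.exp_log (show 0 < cC by linarith), ← Real.exp_add]
    apply Real.exp_lt_exp.2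
    have h1 : η₁ * s ≤ η₁ * a0 := by gcongr
    have h2 : η₁ * a0 = -(D + Real.log cC) - η₁ := by
      rw [ha0]; field_simp; ring
    linarith
  obtain ⟨sm, hsm1, hsm2⟩ := hSmcov δ hδpos hδr0
  rw [hδ, Real.log_exp, neg_neg] at hsm2
  choose! F hF1 hF2 using hcov n
  -- representatives
  obtain ⟨G, hGS, hG⟩ : ∃ G : Ξ → Ξ, (∀ c, G c ∈ sys.Sg) ∧
      ∀ s ≤ a0, ∃ c ∈ sm, dist (sys.th s g) (G c) ≤ 4 * δ := by
    have : ∀ c : Ξ, ∃ o ∈ sys.Sg, (∃ s ≤ a0, dist (sys.th s g) c < 2 * δ) → dist o c < 2 * δ := by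
      intro c
      by_cases h : ∃ s ≤ a0, dist (sys.th s g) c < 2 * δ
      · obtain ⟨s, hs, hsc⟩ := h
        exact ⟨_, hthS s, fun _ => hsc⟩
      · exact ⟨g, hgS, fun h' => absurd h' h⟩
    choose G hG1 hG2 using this
    refine ⟨G, hG1, fun s hs => ?_⟩
    obtain ⟨z, hz, hzd⟩ := (Metric.infDist_lt_iff hSmne).1 (hdelta s hs)
    have := hsm1 hz
    simp only [Set.mem_iUnion, Metric.mem_ball] at this
    obtain ⟨c, hc, hzc⟩ := this
    have h1 : dist (sys.th s g) c < 2 * δ := by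
      linarith [dist_triangle (sys.th s g) z c]
    have h2 := hG2 c ⟨s, hs, h1⟩
    exact ⟨c, hc, by linarith [dist_triangle_right (sys.th s g) (G c) c]⟩
  -- time grid
  set H := (l + Real.log (4 * C 1)) / θ with hH
  have hH0 : 0 ≤ H := div_nonneg (by linarith) hθ0.le
  set h := Real.exp (-H) with hh
  have hhpos : 0 < h := Real.exp_pos _
  have hh1 : h ≤ 1 := by rw [hh]; apply Real.exp_le_one_iff.2; linarith
  have hhθ : C 1 * h ^ θ = r / 4 := by
    have : h ^ θ = r * (4 * C 1)⁻¹ := by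
      rw [hh, ← Real.exp_mul, hH, neg_mul, div_mul_cancel₀ _ hθ0.ne', neg_add, Real.exp_add,
        Real.exp_neg (Real.log _), Real.exp_log (by positivity)]
    rw [this]; field_simp
  set ℓ := T - (a0 + n * t0) with hℓ
  set J := ⌊ℓ / h⌋₊ + 1 with hJ
  have hJle : (J:ℝ) ≤ Real.exp (ℓ + H) + 1 := by
    rw [hJ]; push_cast
    have hx : ℓ / h ≤ Real.exp (ℓ + H) := by
      rw [hh, Real.exp_neg, div_inv_eq_mul, Real.exp_add]
      gcongr
      linarith [Real.add_one_le_exp ℓ]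
    have : (⌊ℓ / h⌋₊ : ℝ) ≤ Real.exp (ℓ + H) := by
      rcases le_total 0 (ℓ / h) with h0 | h0
      · exact (Nat.floor_le h0).trans hx
      · rw [Nat.floor_of_nonpos h0]; simp; positivity
    linarith
  refine ⟨sm.biUnion (fun c => F (G c)) ∪
    (Finset.range J).biUnion (fun j => F (sys.th (a0 + j * h) g)), ?_, ?_⟩
  · intro x hx
    simp only [Set.mem_iUnion, Set.mem_Iic] at hx
    obtain ⟨t, htT, hxt⟩ := hx
    simp only [Set.mem_iUnion, Metric.mem_ball, Finset.mem_union, Finset.mem_biUnion]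
    rcases le_or_gt (t - n * t0) a0 with hcase | hcase
    · obtain ⟨y, hy, rfl⟩ := hArep t (n * t0) hnt0 x hxt
      obtain ⟨c, hc, hcd⟩ := hG _ hcase
      obtain ⟨z, hz, hzd⟩ := hF2 (G c) (hGS c) y (hAB _ hy)
      refine ⟨z, Or.inl ⟨c, hc, hz⟩, ?_⟩
      have h5 := hH5 (n * t0) hnt _ (hthS (t - n * t0)) _ (hGS c) y (hAB _ hy)
      rw [← dist_eq_norm] at h5
      have h6 : L (n * t0) * dist (sys.th (t - n * t0) g) (G c) ≤
          c₁ * Real.exp (β * (n * t0)) * (4 * δ) := by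
        have := (hL (n * t0) hnt).2
        gcongr
      have := dist_triangle (sys.U (sys.th (t - n * t0) g) (n * t0) 0 y)
        (sys.U (G c) (n * t0) 0 y) z
      linarith
    · set j := ⌊(t - n * t0 - a0) / h⌋₊ with hj
      have hq0 : 0 ≤ (t - n * t0 - a0) / h := div_nonneg (by linarith) hhpos.le
      have hj1 : (j:ℝ) * h ≤ t - n * t0 - a0 := (le_div_iff₀ hhpos).1 (Nat.floor_le hq0)
      have hj2 : t - n * t0 - a0 < (j + 1) * h := (div_lt_iff₀ hhpos).1 (Nat.lt_floor_add_one _)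
      have hjJ : j < J := by
        rw [hJ, hj, Nat.lt_succ_iff]
        apply Nat.floor_mono
        gcongr
        rw [hℓ]; linarith
      set tj := a0 + j * h + n * t0 with htj
      have ht1 : tj ≤ t := by rw [htj]; linarith
      have ht2 : t - tj ≤ h := by rw [htj]; linarith
      rw [← hAinv t tj ht1] at hxt
      obtain ⟨y, hy, rfl⟩ := hxt
      have h3 := hH3' g hgS tj (t - tj) ⟨by linarith, by linarith⟩ 0 ⟨le_rfl, zero_le_one⟩
        y (hAB _ hy) y (hAB _ hy)
      rw [sub_self y, norm_zero, Real.zero_rpow hγ.1.ne', zero_add, zero_add, sub_zero,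
        sub_add_cancel, sys.U_id g hgS, id, abs_of_nonneg (by linarith), ← dist_eq_norm] at h3
      have h4 : C 1 * (t - tj) ^ θ ≤ C 1 * h ^ θ := by
        have : 0 ≤ t - tj := by linarith
        gcongr
      obtain ⟨y', hy', hyy⟩ := hArep tj (n * t0) hnt0 y hy
      have hsub : tj - n * t0 = a0 + j * h := by rw [htj]; ring
      rw [hsub] at hyy hy'
      obtain ⟨z, hz, hzd⟩ := hF2 (sys.th (a0 + j * h) g) (hthS _) y' (hAB _ hy')
      rw [hyy] at hzd
      refine ⟨z, Or.inr ⟨j, Finset.mem_range.2 hjJ, hz⟩, ?_⟩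
      have := dist_triangle (sys.U g t tj y) y z
      linarith
  · have hK : ((N0.card ^ n : ℕ) : ℝ) ≤ Real.exp (n * κ₁) := by
      rw [Real.exp_nat_mul, hκ₁, Real.exp_log (by positivity)]
      push_cast
      gcongr
      linarith
    have c1 : (sm.biUnion (fun c => F (G c))).card ≤ sm.card * N0.card ^ n :=
      Finset.card_biUnion_le_card_mul _ _ _ (fun c _ => hF1 _ (hGS c))
    have c2 : ((Finset.range J).biUnion (fun j => F (sys.th (a0 + j * h) g))).card ≤
        J * N0.card ^ n := by
      have := Finset.card_biUnion_le_card_mul (Finset.range J)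
        (fun j => F (sys.th (a0 + j * h) g)) _ (fun j _ => hF1 _ (hthS _))
      rwa [Finset.card_range] at this
    have c3 := (Finset.card_union_le _ _).trans (add_le_add c1 c2)
    have c4 := (Nat.cast_le (α := ℝ)).2 c3
    refine c4.trans ?_
    rw [Nat.cast_add, Nat.cast_mul, Nat.cast_mul]
    have hE := Real.exp_pos (n * κ₁)
    have e1 : (sm.card : ℝ) * ((N0.card ^ n : ℕ) : ℝ) ≤ 2 * Real.exp (M * l) := by
      calc _ ≤ (2 * Real.exp (d * D)) * Real.exp (n * κ₁) := by gcongr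
        _ = 2 * Real.exp (d * D + n * κ₁) := by rw [Real.exp_add]; ring
        _ ≤ _ := by gcongr
    have e2 : (J : ℝ) * ((N0.card ^ n : ℕ) : ℝ) ≤ 2 * Real.exp (M * l) := by
      calc _ ≤ (Real.exp (ℓ + H) + 1) * Real.exp (n * κ₁) := by gcongr
        _ = Real.exp (ℓ + H + n * κ₁) + Real.exp (n * κ₁) := by
          rw [Real.exp_add (ℓ + H)]; ring
        _ ≤ Real.exp (M * l) + Real.exp (M * l) := by
          gcongr
          rw [hℓ, ha0]; linarith
        _ = _ := by ring
    linarith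
end

section
/- Let X be a Banach space and A ⊆ X a nonempty compact set. Then there exists a continuous function g : ℝ → X such that g(t) = 0 for all t ≤ −1 and all t ≥ 2, and A ⊆ g([0,1]). Consequently, if A has infinite box-counting dimension in X, then such a g is bounded with g(ℝ) of infinite box-counting dimension, and its hull H_Ξ(g) in Ξ = C(ℝ,X) has infinite box-counting dimension. -/
open Filter Set Metric
open scoped ENNReal NNReal Topology

/-- `d^{(n)}(ξ₁,ξ₂) = max_{s ∈ [-n,n]} ‖ξ₁(s) - ξ₂(s)‖`. -/
noncomputable def dseg {X : Type*} [NormedAddCommGroup X] (n : ℕ) (ξ₁ ξ₂ : C(ℝ, X)) : ℝ :=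
  sSup ((fun s => ‖ξ₁ s - ξ₂ s‖) '' Set.Icc (-(n:ℝ)) (n:ℝ))

/-- The Fréchet metric on `Ξ = C(ℝ,X)`:
`d_Ξ(ξ₁,ξ₂) = Σₙ 2⁻ⁿ d⁽ⁿ⁾(ξ₁,ξ₂)/(1 + d⁽ⁿ⁾(ξ₁,ξ₂))`. -/
noncomputable def dXi {X : Type*} [NormedAddCommGroup X] (ξ₁ ξ₂ : C(ℝ, X)) : ℝ :=
  ∑' n : ℕ, (1 / 2 ^ n : ℝ) * (dseg n ξ₁ ξ₂ / (1 + dseg n ξ₁ ξ₂))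

/-- The translation group `(θ_t ξ)(s) = ξ(t+s)` on `C(ℝ,X)`. -/
noncomputable def shift {X : Type*} [NormedAddCommGroup X] (t : ℝ) (ξ : C(ℝ, X)) : C(ℝ, X) :=
  ξ.comp ⟨fun s => t + s, by continuity⟩

/-- Covering number of a subset of `Ξ = C(ℝ,X)` by `dXi`-balls of radius `r`. -/
noncomputable def coverNXi {X : Type*} [NormedAddCommGroup X] (K : Set C(ℝ, X)) (r : ℝ) :
    ℝ≥0∞ :=
  sInf {n : ℝ≥0∞ | ∃ s : Finset C(ℝ, X), (s.card : ℝ≥0∞) = n ∧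
    ∀ ξ ∈ K, ∃ c ∈ s, dXi c ξ < r}

/-- Box-counting dimension in `(Ξ, d_Ξ)`. -/
noncomputable def dimBoxXi {X : Type*} [NormedAddCommGroup X] (K : Set C(ℝ, X)) : ℝ≥0∞ :=
  Filter.limsup (fun r : ℝ =>
    if coverNXi K r = ⊤ then (⊤ : ℝ≥0∞)
    else ENNReal.ofReal (Real.log (coverNXi K r).toReal / (-Real.log r)))
    (nhdsWithin 0 (Set.Ioi 0))

/-- The hull of `g` in `(Ξ, d_Ξ)`: the `d_Ξ`-closure of the orbit `{θ_t g : t ∈ ℝ}`. -/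
def hullXi {X : Type*} [NormedAddCommGroup X] (g : C(ℝ, X)) : Set C(ℝ, X) :=
  {ξ : C(ℝ, X) | ∀ ε > (0:ℝ), ∃ t : ℝ, dXi (shift t g) ξ < ε}


theorem aux_ext {X : Type*} [NormedAddCommGroup X] [NormedSpace ℝ X]
    (C : Set ℝ) (hC : IsClosed C) (hne : C.Nonempty) (f : ℝ → X) (hf : ContinuousOn f C) :
    ∃ g : ℝ → X, Continuous g ∧ ∀ c ∈ C, g c = f c := by
  classical
  let T : ℝ → Set X := fun t => convexHull ℝ (f '' {c | c ∈ C ∧ dist t c < 2 * infDist t C})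
  have hG : ∃ G : C((Cᶜ : Set ℝ), X), ∀ x : (Cᶜ : Set ℝ), G x ∈ T x := by
    refine exists_continuous_forall_mem_convex_of_local_const (fun x => convex_convexHull ℝ _) ?_
    intro x
    have hpos : 0 < infDist (x : ℝ) C := (hC.notMem_iff_infDist_pos hne).1 x.2
    obtain ⟨c, hc, hlt⟩ := (infDist_lt_iff hne).1 (show infDist (x : ℝ) C < 2 * infDist (x : ℝ) C by linarith)
    refine ⟨f c, ?_⟩
    have ho : IsOpen {y : (Cᶜ : Set ℝ) | dist (y : ℝ) c < 2 * infDist (y : ℝ) C} := by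
      apply isOpen_lt
      · fun_prop
      · exact continuous_const.mul ((continuous_infDist_pt C).comp continuous_subtype_val)
    filter_upwards [ho.mem_nhds hlt] with y hy
    exact subset_convexHull ℝ _ ⟨c, ⟨hc, hy⟩, rfl⟩
  obtain ⟨G, hG⟩ := hG
  let g : ℝ → X := fun t => if h : t ∈ C then f t else G ⟨t, h⟩
  have hgC : ∀ c ∈ C, g c = f c := fun c hc => by simp [g, hc]
  refine ⟨g, ?_, hgC⟩
  rw [continuous_iff_continuousAt]
  intro t
  by_cases ht : t ∈ C
  · rw [Metric.continuousAt_iff]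
    intro ε hε
    obtain ⟨δ, hδ, H⟩ := Metric.continuousWithinAt_iff.1 (hf t ht) ε hε
    refine ⟨δ / 3, by positivity, ?_⟩
    intro y hy
    rw [hgC t ht]
    by_cases hyC : y ∈ C
    · rw [hgC y hyC]
      exact H hyC (by linarith)
    · have h1 : g y ∈ T y := by
        have := hG ⟨y, hyC⟩
        simpa [g, hyC] using this
      have h2 : T y ⊆ ball (f t) ε := by
        apply convexHull_min _ (convex_ball _ _)
        rintro _ ⟨c, ⟨hc, hlt⟩, rfl⟩
        apply H hc
        have h3 : infDist y C ≤ dist y t := infDist_le_dist_of_mem ht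
        have h4 := dist_triangle c y t
        rw [dist_comm c y] at h4
        linarith
      exact h2 h1
  · have hon : ContinuousOn g Cᶜ := by
      rw [continuousOn_iff_continuous_restrict]
      refine G.continuous.congr ?_
      intro x
      have hx : (x : ℝ) ∉ C := x.2
      simp [Set.restrict, g, hx]
    exact hon.continuousAt (hC.isOpen_compl.mem_nhds ht)

theorem aux_path {X : Type*} [NormedAddCommGroup X] [NormedSpace ℝ X]
    (A : Set X) (hAcpt : IsCompact A) (hAne : A.Nonempty) :
    ∃ g : C(ℝ, X), (∀ t : ℝ, t ≤ -1 → g t = 0) ∧ (∀ t : ℝ, 2 ≤ t → g t = 0) ∧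
      A ⊆ ⇑g '' Set.Icc (0:ℝ) 1 := by
  classical
  have : Nonempty A := hAne.to_subtype
  have : CompactSpace A := isCompact_iff_compactSpace.1 hAcpt
  obtain ⟨p, hp, hps⟩ := exists_nat_bool_continuous_surjective_of_compact A
  let q : cantorSet → X := fun c => (p (cantorSetHomeomorphNatToBool c) : X)
  have hq : Continuous q :=
    continuous_subtype_val.comp (hp.comp cantorSetHomeomorphNatToBool.continuous)
  let f : ℝ → X := fun t => if h : t ∈ cantorSet then q ⟨t, h⟩ else 0
  have hf : ContinuousOn f cantorSet := by
    rw [continuousOn_iff_continuous_restrict]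
    refine hq.congr ?_
    intro x
    simp [Set.restrict, f]
  obtain ⟨g, hg, hgf⟩ := aux_ext cantorSet isClosed_cantorSet ⟨0, zero_mem_cantorSet⟩ f hf
  refine ⟨⟨fun t => (max 0 (min 1 (min (t + 1) (2 - t)))) • g t, by fun_prop⟩, ?_, ?_, ?_⟩
  · intro t ht
    have : max 0 (min 1 (min (t + 1) (2 - t))) = 0 :=
      max_eq_left ((min_le_right _ _).trans ((min_le_left _ _).trans (by linarith)))
    simp [this]
  · intro t ht
    have : max 0 (min 1 (min (t + 1) (2 - t))) = 0 :=
      max_eq_left ((min_le_right _ _).trans ((min_le_right _ _).trans (by linarith)))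
    simp [this]
  · intro a ha
    obtain ⟨b, hb⟩ := hps ⟨a, ha⟩
    let c := cantorSetHomeomorphNatToBool.symm b
    have hcI : (c : ℝ) ∈ Set.Icc (0:ℝ) 1 := cantorSet_subset_unitInterval c.2
    refine ⟨c, hcI, ?_⟩
    have h1 : max 0 (min 1 (min ((c : ℝ) + 1) (2 - c))) = 1 := by
      rw [min_eq_left (le_min (by linarith [hcI.1]) (by linarith [hcI.2]))]
      simp
    have h2 : f c = a := by
      simp [f, q, c, hb]
    simp [h1, hgf c c.2, h2]

theorem aux_bdd {X : Type*} [NormedAddCommGroup X] (g : C(ℝ, X))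
    (h1 : ∀ t : ℝ, t ≤ -1 → g t = 0) (h2 : ∀ t : ℝ, 2 ≤ t → g t = 0) :
    ∃ M : ℝ, ∀ t : ℝ, ‖g t‖ ≤ M := by
  obtain ⟨M, hM⟩ := (isCompact_Icc (a := (-1:ℝ)) (b := 2)).exists_bound_of_continuousOn
    g.continuous.continuousOn
  refine ⟨max M 0, fun t => ?_⟩
  by_cases h : t ∈ Set.Icc (-1:ℝ) 2
  · exact (hM t h).trans (le_max_left _ _)
  · have : g t = 0 := by
      by_cases h' : t ≤ -1
      · exact h1 t h'
      · apply h2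
        by_contra h''
        exact h ⟨by linarith, by linarith⟩
    simp [this]

theorem aux_dseg_nonneg {X : Type*} [NormedAddCommGroup X] (n : ℕ) (a b : C(ℝ, X)) :
    0 ≤ dseg n a b := by
  apply Real.sSup_nonneg
  rintro _ ⟨s, _, rfl⟩
  exact norm_nonneg _

theorem aux_eval {X : Type*} [NormedAddCommGroup X] (a b : C(ℝ, X)) (r : ℝ)
    (hr : r ≤ 1 / 2) (h : dXi a b < r) : ‖a 0 - b 0‖ < 2 * r := by
  have hz : dseg 0 a b = ‖a 0 - b 0‖ := by simp [dseg]
  have hnn : ∀ n, 0 ≤ (1 / 2 ^ n : ℝ) * (dseg n a b / (1 + dseg n a b)) := fun n => by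
    have := aux_dseg_nonneg n a b
    positivity
  have hs : Summable fun n : ℕ => (1 / 2 ^ n : ℝ) * (dseg n a b / (1 + dseg n a b)) := by
    refine Summable.of_nonneg_of_le hnn (fun n => ?_) summable_geometric_two
    have h0 := aux_dseg_nonneg n a b
    have h1 : dseg n a b / (1 + dseg n a b) ≤ 1 := by
      rw [div_le_one (by linarith)]; linarith
    rw [one_div_pow]
    exact mul_le_of_le_one_right (by positivity) h1
  have h0 := hs.le_tsum 0 (fun n _ => hnn n)
  rw [hz] at h0
  have h1 : ‖a 0 - b 0‖ / (1 + ‖a 0 - b 0‖) < r := by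
    have : dXi a b = ∑' n : ℕ, (1 / 2 ^ n : ℝ) * (dseg n a b / (1 + dseg n a b)) := rfl
    rw [← this] at h0
    simp at h0
    linarith
  have hn := norm_nonneg (a 0 - b 0)
  rw [div_lt_iff₀ (by linarith)] at h1
  nlinarith

theorem aux_hull {X : Type*} [NormedAddCommGroup X] (g : C(ℝ, X)) (t : ℝ) :
    shift t g ∈ hullXi g := by
  intro ε hε
  refine ⟨t, ?_⟩
  have hz : ∀ n, dseg n (shift t g) (shift t g) = 0 := by
    intro n
    apply le_antisymm _ (aux_dseg_nonneg _ _ _)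
    apply Real.sSup_nonpos
    rintro _ ⟨s, _, rfl⟩
    simp
  simpa [dXi, hz] using hε

theorem aux_one_le {X : Type*} [MetricSpace X] (A : Set X) (hA : A.Nonempty) (r : ℝ) :
    1 ≤ coverN A r := by
  apply le_sInf
  rintro _ ⟨s, rfl, hs⟩
  obtain ⟨a, ha⟩ := hA
  have hn : s.Nonempty := by
    have := hs ha
    simp only [mem_iUnion] at this
    obtain ⟨x, hx, _⟩ := this
    exact ⟨x, hx⟩
  exact_mod_cast hn.card_pos

theorem aux_mono {X : Type*} [MetricSpace X] (A B : Set X) (h : A ⊆ B) (r : ℝ) :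
    coverN A r ≤ coverN B r := by
  apply sInf_le_sInf
  rintro _ ⟨s, hs, hs'⟩
  exact ⟨s, hs, h.trans hs'⟩

theorem aux_coverXi {X : Type*} [NormedAddCommGroup X] (A : Set X) (g : C(ℝ, X))
    (h : A ⊆ range g) (r : ℝ) (hr : r ≤ 1 / 2) :
    coverN A (2 * r) ≤ coverNXi (hullXi g) r := by
  classical
  apply le_sInf
  rintro _ ⟨s, rfl, hs⟩
  have h1 : coverN A (2 * r) ≤ ((s.image fun c : C(ℝ, X) => c 0).card : ℝ≥0∞) := by
    apply sInf_le
    refine ⟨_, rfl, ?_⟩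
    intro a ha
    obtain ⟨t, rfl⟩ := h ha
    obtain ⟨c, hc, hlt⟩ := hs _ (aux_hull g t)
    have h2 := aux_eval _ _ r hr hlt
    simp only [mem_iUnion]
    refine ⟨c 0, Finset.mem_image_of_mem _ hc, ?_⟩
    rw [mem_ball, dist_comm, dist_eq_norm]
    simpa [shift] using h2
  refine h1.trans ?_
  exact_mod_cast Finset.card_image_le

theorem aux_dim (F G : ℝ → ℝ≥0∞) (hF : ∀ r, 1 ≤ F r)
    (h : ∀ r, 0 < r → r ≤ 1 / 2 → F (2 * r) ≤ G r)
    (htop : limsup (fun r : ℝ => if F r = ⊤ then (⊤ : ℝ≥0∞)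
      else ENNReal.ofReal (Real.log (F r).toReal / (-Real.log r))) (𝓝[>] 0) = ⊤) :
    limsup (fun r : ℝ => if G r = ⊤ then (⊤ : ℝ≥0∞)
      else ENNReal.ofReal (Real.log (G r).toReal / (-Real.log r))) (𝓝[>] 0) = ⊤ := by
  set u : ℝ → ℝ≥0∞ := fun r : ℝ => if F r = ⊤ then (⊤ : ℝ≥0∞)
      else ENNReal.ofReal (Real.log (F r).toReal / (-Real.log r)) with hu
  set v : ℝ → ℝ≥0∞ := fun r : ℝ => if G r = ⊤ then (⊤ : ℝ≥0∞)
      else ENNReal.ofReal (Real.log (G r).toReal / (-Real.log r)) with hv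
  have hle : (𝓝[>] (0:ℝ)) ≤ map (fun r : ℝ => 2 * r) (𝓝[>] 0) := by
    have hid : map (fun r : ℝ => 2 * r) (map (fun r : ℝ => r / 2) (𝓝[>] (0:ℝ))) = 𝓝[>] 0 := by
      rw [map_map]
      convert map_id using 2
      ext r
      simp
      ring
    conv_lhs => rw [← hid]
    apply map_mono
    have : Tendsto (fun r : ℝ => r / 2) (𝓝[>] 0) (𝓝[>] 0) := by
      apply tendsto_nhdsWithin_iff.2
      constructor
      · have : Tendsto (fun r : ℝ => r / 2) (𝓝 0) (𝓝 (0 / 2)) :=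
          (continuous_id.div_const 2).tendsto 0
        rw [zero_div] at this
        exact this.mono_left nhdsWithin_le_nhds
      · filter_upwards [self_mem_nhdsWithin] with r hr
        have : (0:ℝ) < r := hr
        exact half_pos this
    exact this
  have h1 : limsup u (𝓝[>] 0) ≤ limsup (fun r => u (2 * r)) (𝓝[>] 0) := by
    have := limsup_le_limsup_of_le (u := u) hle
    exact this
  have h2 : limsup (fun r => u (2 * r)) (𝓝[>] 0) ≤ limsup (fun r => 2 * v r) (𝓝[>] 0) := by
    refine limsup_le_limsup ?_
    have hev : ∀ᶠ r : ℝ in 𝓝[>] 0, r < 1 / 4 :=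
      nhdsWithin_le_nhds (Iio_mem_nhds (by norm_num))
    filter_upwards [hev, self_mem_nhdsWithin] with r hr hr0
    have hr0 : 0 < r := hr0
    have hFG := h r hr0 (by linarith)
    simp only [hu, hv]
    by_cases hG : G r = ⊤
    · simp [hG]
    have hFt : F (2 * r) ≠ ⊤ := ne_top_of_le_ne_top hG hFG
    rw [if_neg hG, if_neg hFt]
    have h2' : (2:ℝ≥0∞) = ENNReal.ofReal 2 := by simp
    rw [h2', ← ENNReal.ofReal_mul (by norm_num)]
    apply ENNReal.ofReal_le_ofReal
    have hF1 : 1 ≤ (F (2 * r)).toReal := by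
      have := ENNReal.toReal_mono hFt (hF (2 * r))
      simpa using this
    have hFG' : (F (2 * r)).toReal ≤ (G r).toReal := ENNReal.toReal_mono hG hFG
    have hl0 : 0 ≤ Real.log (F (2 * r)).toReal := Real.log_nonneg hF1
    have hl1 : Real.log (F (2 * r)).toReal ≤ Real.log (G r).toReal :=
      Real.log_le_log (by linarith) hFG'
    have hlog : Real.log (2 * r) = Real.log 2 + Real.log r :=
      Real.log_mul (by norm_num) hr0.ne'
    have hlr : Real.log r ≤ - (2 * Real.log 2) := by
      have h4 : Real.log r ≤ Real.log (1 / 4) := Real.log_le_log hr0 hr.le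
      have h5 : Real.log (1 / 4 : ℝ) = - (2 * Real.log 2) := by
        rw [one_div, Real.log_inv, show (4:ℝ) = 2 ^ 2 by norm_num, Real.log_pow]
        norm_num
      linarith
    have hl2 : 0 < Real.log 2 := Real.log_pos (by norm_num)
    calc Real.log (F (2 * r)).toReal / (-Real.log (2 * r))
        ≤ Real.log (G r).toReal / (-Real.log r / 2) := by
          apply div_le_div₀ (hl0.trans hl1) hl1 (by linarith) (by rw [hlog]; linarith)
      _ = 2 * (Real.log (G r).toReal / (-Real.log r)) := by
          rw [div_div_eq_mul_div]; ring
  rw [ENNReal.limsup_const_mul_of_ne_top (by simp)] at h2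
  rw [htop] at h1
  have h3 := top_le_iff.1 (h1.trans h2)
  rcases ENNReal.mul_eq_top.1 h3 with h | h
  · exact h.2
  · exact absurd h.1 (by simp)

theorem aux_anti {X : Type*} [MetricSpace X] (A : Set X) (r s : ℝ) (h : r ≤ s) :
    coverN A s ≤ coverN A r := by
  apply sInf_le_sInf
  rintro _ ⟨t, ht, ht'⟩
  exact ⟨t, ht, ht'.trans (iUnion₂_mono fun x _ => ball_subset_ball h)⟩

/-- for every nonempty compact `A ⊆ X` there is a continuous `g : ℝ → X`
vanishing outside `[-1,2]` with `A ⊆ g([0,1])`; consequently, if `A` has infinite box-counting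
dimension, such a `g` is bounded, its range has infinite box-counting dimension, and its hull
`H_Ξ(g)` has infinite box-counting dimension in `(Ξ, d_Ξ)`. -/
theorem statement17 {X : Type*} [NormedAddCommGroup X] [NormedSpace ℝ X] [CompleteSpace X]
    (A : Set X) (hAcpt : IsCompact A) (hAne : A.Nonempty) :
    ∃ g : C(ℝ, X), (∀ t : ℝ, t ≤ -1 → g t = 0) ∧ (∀ t : ℝ, 2 ≤ t → g t = 0) ∧
      A ⊆ ⇑g '' Set.Icc (0:ℝ) 1 ∧
      (dimBox A = ⊤ →
        (∃ M : ℝ, ∀ t : ℝ, ‖g t‖ ≤ M) ∧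
        dimBox (Set.range ⇑g) = ⊤ ∧
        dimBoxXi (hullXi g) = ⊤) := by
  obtain ⟨g, h1, h2, h3⟩ := aux_path A hAcpt hAne
  have h4 : A ⊆ range g := h3.trans (image_subset_range _ _)
  refine ⟨g, h1, h2, h3, fun hdim => ⟨aux_bdd g h1 h2, ?_, ?_⟩⟩
  · refine aux_dim (coverN A) (coverN (range g)) (aux_one_le A hAne) (fun r hr _ => ?_) hdim
    exact (aux_anti A r (2 * r) (by linarith)).trans (aux_mono _ _ h4 r)
  · exact aux_dim (coverN A) (coverNXi (hullXi g)) (aux_one_le A hAne)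
      (fun r _ hr => aux_coverXi A g h4 r hr) hdim
end
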